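/- arXiv:2002.09095 — 4 statements merged into one kernel-verified Lean document; each statement's English description precedes it below -/
import Mathlib

section
/- Assume β₂ < 1. Then for every k ≥ 1: (a) for every j ≤ k, ‖g^(j) ⊘ √v̂^(k)‖ ≤ √(‖g^(j)‖₀) / √(1−β₂); (b) ‖m^(k) ⊘ √v̂^(k)‖ ≤ ∑_{j=1}^{k} (1−β₁) β₁^{k−j} √(‖g^(j)‖₀) / √(1−β₂); and (c) ‖m^(k) ⊘ √v̂^(k)‖² ≤ ((1−β₁)/(1−β₂)) · ∑_{j=1}^{k} β₁^{k−j} ‖g^(j)‖₀. -/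
open Finset

/-!
Unrolled, `m^(k)` is a convex combination of `0, g^(1), …, g^(k)`, the vector `g^(j)` having weight
`(1 - β₁) β₁^(k-j)`. Hence both bounds on `m^(k)` are Jensen's inequality, applied to the seminorm
`u ↦ ‖u ⊘ √v̂^(k)‖` for (b) and to its square for (c). What remains is the bound on each `g^(j)`:
since `v̂^(k) ≥ v^(j) ≥ (1 - β₂) g^(j) ⊙ g^(j)`, every nonzero component of `g^(j) ⊘ √v̂^(k)` has
square at most `1 / (1 - β₂)`.
-/

lemma le_of_forall_succ_eq_sup {α : Type*} [SemilatticeSup α] {u s : ℕ → α}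
    (hs : ∀ k, s (k + 1) = s k ⊔ u (k + 1)) {j k : ℕ} (hjk : j + 1 ≤ k) : u (j + 1) ≤ s k := by
  have mono : Monotone s := monotone_nat_of_le_succ fun t => hs t ▸ le_sup_left
  calc u (j + 1) ≤ s (j + 1) := hs j ▸ le_sup_right
    _ ≤ s k := mono hjk

/-- `m` is an exponential moving average of `x` with decay rate `β`, as are the AMSGrad moments
`m^(k)` and `v^(k)`. The initial value `m 0` is arbitrary, and `x 0` is never read. -/
def IsExpMovingAverage {E : Type*} [AddCommGroup E] [Module ℝ E] (β : ℝ) (x m : ℕ → E) : Prop :=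
  ∀ k, m (k + 1) = β • m k + (1 - β) • x (k + 1)

namespace IsExpMovingAverage

section Convex

variable {E : Type*} [AddCommGroup E] [Module ℝ E] {β : ℝ} {x m : ℕ → E} {f : E → ℝ}

lemma map_le_of_convexOn (hm : IsExpMovingAverage β x m) (hβ : β ∈ Set.Icc 0 1)
    (hf : ConvexOn ℝ Set.univ f) (k : ℕ) :
    f (m k) ≤ β ^ k * f (m 0) + ∑ j ∈ Icc 1 k, (1 - β) * β ^ (k - j) * f (x j) := by
  induction k with
  | zero => simp
  | succ k ih =>
    have decay : ∑ j ∈ Icc 1 k, (1 - β) * β ^ (k + 1 - j) * f (x j)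
        = β * ∑ j ∈ Icc 1 k, (1 - β) * β ^ (k - j) * f (x j) := by
      rw [mul_sum]
      refine sum_congr rfl fun j hj => ?_
      rw [Nat.succ_sub (mem_Icc.mp hj).2, pow_succ]
      ring
    calc f (m (k + 1))
        = f (β • m k + (1 - β) • x (k + 1)) := by rw [hm k]
      _ ≤ β * f (m k) + (1 - β) * f (x (k + 1)) :=
          hf.2 (Set.mem_univ _) (Set.mem_univ _) hβ.1 (sub_nonneg.2 hβ.2) (add_sub_cancel _ _)
      _ ≤ β * (β ^ k * f (m 0) + ∑ j ∈ Icc 1 k, (1 - β) * β ^ (k - j) * f (x j))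
            + (1 - β) * f (x (k + 1)) := by
          gcongr
          exact hβ.1
      _ = β ^ (k + 1) * f (m 0)
            + ∑ j ∈ Icc 1 (k + 1), (1 - β) * β ^ (k + 1 - j) * f (x j) := by
          rw [sum_Icc_succ_top (Nat.le_add_left 1 k), decay, Nat.sub_self]
          ring

lemma map_le_sum_of_convexOn (hm : IsExpMovingAverage β x m) (hβ : β ∈ Set.Icc 0 1)
    (hf : ConvexOn ℝ Set.univ f) (hf0 : f (m 0) ≤ 0) {k : ℕ} {B : ℕ → ℝ}
    (hB : ∀ j ∈ Icc 1 k, f (x j) ≤ B j) :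
    f (m k) ≤ ∑ j ∈ Icc 1 k, (1 - β) * β ^ (k - j) * B j := by
  have initial : β ^ k * f (m 0) ≤ 0 := mul_nonpos_of_nonneg_of_nonpos (pow_nonneg hβ.1 k) hf0
  have terms : ∑ j ∈ Icc 1 k, (1 - β) * β ^ (k - j) * f (x j)
      ≤ ∑ j ∈ Icc 1 k, (1 - β) * β ^ (k - j) * B j :=
    sum_le_sum fun j hj => mul_le_mul_of_nonneg_left (hB j hj)
      (mul_nonneg (sub_nonneg.2 hβ.2) (pow_nonneg hβ.1 _))
  linarith [hm.map_le_of_convexOn hβ hf k]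

end Convex

section Order

variable {E : Type*} [AddCommGroup E] [PartialOrder E] [IsOrderedAddMonoid E] [Module ℝ E]
  [PosSMulMono ℝ E] {β : ℝ} {x m : ℕ → E}

lemma nonneg (hm : IsExpMovingAverage β x m) (hβ : β ∈ Set.Icc 0 1) (hm0 : 0 ≤ m 0)
    (hx : ∀ k, 0 ≤ x (k + 1)) (k : ℕ) : 0 ≤ m k := by
  induction k with
  | zero => exact hm0
  | succ k ih =>
    rw [hm k]
    exact add_nonneg (smul_nonneg hβ.1 ih) (smul_nonneg (sub_nonneg.2 hβ.2) (hx k))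

lemma one_sub_smul_le (hm : IsExpMovingAverage β x m) (hβ : β ∈ Set.Icc 0 1) (hm0 : 0 ≤ m 0)
    (hx : ∀ k, 0 ≤ x (k + 1)) (k : ℕ) : (1 - β) • x (k + 1) ≤ m (k + 1) := by
  rw [hm k]
  exact le_add_of_nonneg_left (smul_nonneg hβ.1 (hm.nonneg hβ hm0 hx k))

end Order

lemma one_sub_smul_le_of_forall_succ_eq_sup {E : Type*} [AddCommGroup E] [SemilatticeSup E]
    [IsOrderedAddMonoid E] [Module ℝ E] [PosSMulMono ℝ E] {β : ℝ} {x m s : ℕ → E}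
    (hm : IsExpMovingAverage β x m) (hβ : β ∈ Set.Icc 0 1) (hm0 : 0 ≤ m 0)
    (hx : ∀ k, 0 ≤ x (k + 1)) (hs : ∀ k, s (k + 1) = s k ⊔ m (k + 1)) {j k : ℕ}
    (hj : j ∈ Icc 1 k) : (1 - β) • x j ≤ s k := by
  obtain ⟨hj1, hjk⟩ := mem_Icc.mp hj
  obtain ⟨j, rfl⟩ := Nat.exists_eq_add_of_le' hj1
  exact (hm.one_sub_smul_le hβ hm0 hx j).trans (le_of_forall_succ_eq_sup hs hjk)

end IsExpMovingAverage

lemma div_sqrt_sq_le_inv {c x w : ℝ} (hc : 0 < c) (h : c * x ^ 2 ≤ w) : (x / √w) ^ 2 ≤ c⁻¹ := by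
  have hw : 0 ≤ w := (by positivity : 0 ≤ c * x ^ 2).trans h
  rw [div_pow, Real.sq_sqrt hw]
  exact div_le_of_le_mul₀ hw (inv_nonneg.2 hc.le) ((le_inv_mul_iff₀ hc).2 h)

section Rescaling

variable {ι : Type*} [Fintype ι]

/-- The seminorm `u ↦ ‖u ⊘ √w‖` on `ℝ^ι`, where `‖·‖` is the Euclidean norm. Components with
`w i ≤ 0` are ignored, because there `√(w i) = 0` and the quotient is `0` by convention. -/
noncomputable def divSqrtSeminorm (w : ι → ℝ) : Seminorm ℝ (ι → ℝ) :=
  (normSeminorm ℝ (EuclideanSpace ℝ ι)).comp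
    ((WithLp.linearEquiv 2 ℝ (ι → ℝ)).symm.toLinearMap ∘ₗ LinearMap.mulRight ℝ fun i => (√(w i))⁻¹)

lemma divSqrtSeminorm_apply (w u : ι → ℝ) :
    divSqrtSeminorm w u = √(∑ i, (u i / √(w i)) ^ 2) := by
  simp [divSqrtSeminorm, EuclideanSpace.norm_eq, div_eq_mul_inv, mul_pow]

lemma divSqrtSeminorm_sq (w u : ι → ℝ) :
    divSqrtSeminorm w u ^ 2 = ∑ i, (u i / √(w i)) ^ 2 := by
  rw [divSqrtSeminorm_apply, Real.sq_sqrt (sum_nonneg fun i _ => sq_nonneg _)]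

lemma convexOn_divSqrtSeminorm_sq (w : ι → ℝ) :
    ConvexOn ℝ Set.univ fun u => divSqrtSeminorm w u ^ 2 :=
  (divSqrtSeminorm w).convexOn.pow (fun _ _ => apply_nonneg _ _) 2

lemma divSqrtSeminorm_sq_le {c : ℝ} (hc : 0 < c) {u w : ι → ℝ} (h : ∀ i, c * u i ^ 2 ≤ w i) :
    divSqrtSeminorm w u ^ 2 ≤ #{i | u i ≠ 0} / c := by
  rw [divSqrtSeminorm_sq]
  calc ∑ i, (u i / √(w i)) ^ 2
      = ∑ i with u i ≠ 0, (u i / √(w i)) ^ 2 :=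
        (sum_filter_of_ne fun i _ => mt fun hu => by simp [hu]).symm
    _ ≤ #{i | u i ≠ 0} • c⁻¹ := sum_le_card_nsmul _ _ _ fun i _ => div_sqrt_sq_le_inv hc (h i)
    _ = #{i | u i ≠ 0} / c := by rw [nsmul_eq_mul, div_eq_mul_inv]

lemma divSqrtSeminorm_le {c : ℝ} (hc : 0 < c) {u w : ι → ℝ} (h : ∀ i, c * u i ^ 2 ≤ w i) :
    divSqrtSeminorm w u ≤ √(#{i | u i ≠ 0}) / √c := by
  rw [← Real.sqrt_div (Nat.cast_nonneg _)]
  exact Real.le_sqrt_of_sq_le (divSqrtSeminorm_sq_le hc h)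

theorem stmt11_general {β₁ β₂ : ℝ} (hβ₁ : β₁ ∈ Set.Icc 0 1) (hβ₂ : β₂ ∈ Set.Ico 0 1)
    {g m v vhat : ℕ → ι → ℝ} (hm0 : m 0 = 0) (hv0 : 0 ≤ v 0) (hm : IsExpMovingAverage β₁ g m)
    (hv : IsExpMovingAverage β₂ (fun k => g k ^ 2) v)
    (hvhat : ∀ k, vhat (k + 1) = vhat k ⊔ v (k + 1)) (k : ℕ) :
    (∀ j, 1 ≤ j → j ≤ k →
        √(∑ i, (g j i / √(vhat k i)) ^ 2) ≤ √(#{i | g j i ≠ 0}) / √(1 - β₂))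
    ∧ √(∑ i, (m k i / √(vhat k i)) ^ 2)
        ≤ ∑ j ∈ Icc 1 k, (1 - β₁) * β₁ ^ (k - j) * (√(#{i | g j i ≠ 0}) / √(1 - β₂))
    ∧ ∑ i, (m k i / √(vhat k i)) ^ 2
        ≤ (1 - β₁) / (1 - β₂) * ∑ j ∈ Icc 1 k, β₁ ^ (k - j) * (#{i | g j i ≠ 0} : ℝ) := by
  have hc : 0 < 1 - β₂ := sub_pos.2 hβ₂.2
  have hg : ∀ j ∈ Icc 1 k, ∀ i, (1 - β₂) * g j i ^ 2 ≤ vhat k i := fun j hj =>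
    hv.one_sub_smul_le_of_forall_succ_eq_sup (Set.Ico_subset_Icc_self hβ₂) hv0
      (fun t i => sq_nonneg (g (t + 1) i)) hvhat hj
  simp only [← divSqrtSeminorm_sq, Real.sqrt_sq (apply_nonneg (divSqrtSeminorm _) _)]
  refine ⟨fun j h1 hk => divSqrtSeminorm_le hc (hg j (mem_Icc.2 ⟨h1, hk⟩)), ?_, ?_⟩
  · exact hm.map_le_sum_of_convexOn hβ₁ (divSqrtSeminorm (vhat k)).convexOn (by simp [hm0])
      fun j hj => divSqrtSeminorm_le hc (hg j hj)
  · calc divSqrtSeminorm (vhat k) (m k) ^ 2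
        ≤ ∑ j ∈ Icc 1 k, (1 - β₁) * β₁ ^ (k - j) * (#{i | g j i ≠ 0} / (1 - β₂)) :=
          hm.map_le_sum_of_convexOn hβ₁ (convexOn_divSqrtSeminorm_sq (vhat k)) (by simp [hm0])
            fun j hj => divSqrtSeminorm_sq_le hc (hg j hj)
      _ = (1 - β₁) / (1 - β₂) * ∑ j ∈ Icc 1 k, β₁ ^ (k - j) * (#{i | g j i ≠ 0} : ℝ) := by
          rw [mul_sum]
          exact sum_congr rfl fun j _ => by ring

end Rescaling

/-- For every `k ≥ 1`:
(a) for every `j ≤ k`, `‖g^(j) ⊘ √v̂^(k)‖ ≤ √(‖g^(j)‖₀)/√(1−β₂)`;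
(b) `‖m^(k) ⊘ √v̂^(k)‖ ≤ ∑_{j=1}^k (1−β₁) β₁^{k−j} √(‖g^(j)‖₀)/√(1−β₂)`;
(c) `‖m^(k) ⊘ √v̂^(k)‖² ≤ ((1−β₁)/(1−β₂)) ∑_{j=1}^k β₁^{k−j} ‖g^(j)‖₀`.
Componentwise division by `0` is `0` (Lean's convention), `‖u‖₀` is the number of nonzero
components, and the Euclidean norms are written via `√(∑ …²)`. -/
theorem stmt11
    {n : ℕ} (hn : 1 ≤ n)
    (β₁ β₂ : ℝ) (hβ₁ : β₁ ∈ Set.Ico (0:ℝ) 1) (hβ₂ : β₂ ∈ Set.Ico (0:ℝ) 1)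
    (g m v vhat : ℕ → Fin n → ℝ)
    (hm0 : ∀ i, m 0 i = 0) (hv0 : ∀ i, v 0 i = 0) (hvhat0 : ∀ i, vhat 0 i = 0)
    (hm : ∀ k i, m (k+1) i = β₁ * m k i + (1 - β₁) * g (k+1) i)
    (hv : ∀ k i, v (k+1) i = β₂ * v k i + (1 - β₂) * (g (k+1) i)^2)
    (hvhat : ∀ k i, vhat (k+1) i = max (vhat k i) (v (k+1) i))
    (k : ℕ) (hk : 1 ≤ k) :
    (∀ j, 1 ≤ j → j ≤ k →
        Real.sqrt (∑ i, (g j i / Real.sqrt (vhat k i))^2)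
          ≤ Real.sqrt ((Finset.univ.filter (fun i => g j i ≠ 0)).card) / Real.sqrt (1 - β₂))
    ∧ Real.sqrt (∑ i, (m k i / Real.sqrt (vhat k i))^2)
        ≤ ∑ j ∈ Finset.Icc 1 k, (1 - β₁) * β₁ ^ (k - j) *
            (Real.sqrt ((Finset.univ.filter (fun i => g j i ≠ 0)).card) / Real.sqrt (1 - β₂))
    ∧ (∑ i, (m k i / Real.sqrt (vhat k i))^2)
        ≤ ((1 - β₁) / (1 - β₂)) *
            ∑ j ∈ Finset.Icc 1 k, β₁ ^ (k - j) *
              ((Finset.univ.filter (fun i => g j i ≠ 0)).card : ℝ) :=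
  stmt11_general (Set.Ico_subset_Icc_self hβ₁) hβ₂ (funext hm0) (fun i => (hv0 i).ge)
    (fun k => funext (hm k)) (fun k => funext (hv k)) (fun k => funext (hvhat k)) k
end

section
/- Assume additionally that (α_k) is nonincreasing, that ṽ^(k−1) ≤ ṽ^(k) componentwise for all 2 ≤ k ≤ K, and that F : ℝ^n → ℝ is differentiable. Define Γ_i = max_{1 ≤ k ≤ K} |g_i^(k)| and Φ_i = max_{1 ≤ k ≤ K} |∂F/∂x_i (x^(k))|. Then for every 2 ≤ k ≤ K: ⟨∇F(x^(k)), z^(k+1) − z^(k)⟩ ≤ −α_{k−1} · ∑_{i=1}^{n} (∂F/∂x_i(x^(k))) · g_i^(k) / √(ṽ_i^(k−1)) + (1/(1−β₁)) · ∑_{i=1}^{n} Γ_i Φ_i · ( α_{k−1}/√(ṽ_i^(k−1)) − α_k/√(ṽ_i^(k)) ). -/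
open Finset

/-!
The extrapolation in `z` is chosen so that `(1 - β₁) (z^(k+1) - z^(k))` is the step
`x^(k+1) - x^(k)` minus `β₁` times the step before it. Since `β₁ m^(k-1) = m^(k) - (1 - β₁) g^(k)`,
the momentum cancels from `z^(k+1) - z^(k)` up to a multiple of `m^(k)` by the decrease of the
effective step size `α_k / √ṽ^(k)`, leaving a plain step along `-g^(k)`. The multiple of `m^(k)`
is bounded coordinatewise, because `m^(k)` is a convex combination of `0, g^(1), …, g^(k)`.
-/

section MovingAverage

theorem movingAverage_mem {𝕜 E : Type*} [Ring 𝕜] [PartialOrder 𝕜] [IsOrderedAddMonoid 𝕜]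
    [AddCommMonoid E] [SMul 𝕜 E] {s : Set E} (hs : Convex 𝕜 s) {β : 𝕜} (hβ : β ∈ Set.Icc 0 1)
    {g m : ℕ → E} (hm0 : m 0 ∈ s) (hm : ∀ k, m (k + 1) = β • m k + (1 - β) • g (k + 1))
    {k : ℕ} (hg : ∀ j, 1 ≤ j → j ≤ k → g j ∈ s) : m k ∈ s := by
  induction k with
  | zero => exact hm0
  | succ k ih =>
    have hmk : m k ∈ s := ih fun j h1 hj => hg j h1 (hj.trans k.le_succ)
    have hgk : g (k + 1) ∈ s := hg (k + 1) k.succ_pos le_rfl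
    rw [hm]
    exact hs hmk hgk hβ.1 (sub_nonneg.mpr hβ.2) (add_sub_cancel β 1)

variable {𝕜 : Type*} [Field 𝕜] [LinearOrder 𝕜] [IsStrictOrderedRing 𝕜]

theorem abs_movingAverage_le {β G : 𝕜} (hβ : β ∈ Set.Icc 0 1) {g m : ℕ → 𝕜} (hm0 : m 0 = 0)
    (hm : ∀ k, m (k + 1) = β * m k + (1 - β) * g (k + 1)) {k : ℕ} (hk : 1 ≤ k)
    (hg : ∀ j, 1 ≤ j → j ≤ k → |g j| ≤ G) : |m k| ≤ G := by
  have hG : 0 ≤ G := (abs_nonneg _).trans (hg k hk le_rfl)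
  have hm0_mem : m 0 ∈ Set.Icc (-G) G := hm0 ▸ ⟨neg_nonpos.mpr hG, hG⟩
  exact abs_le.mpr <| movingAverage_mem (convex_Icc (-G) G) hβ hm0_mem hm
    fun j h1 hj => abs_le.mp (hg j h1 hj)

end MovingAverage

section Extrapolation

theorem extrapolation_succ_sub {𝕜 : Type*} [Field 𝕜] {β : 𝕜} (hβ : β ≠ 1)
    {g m a x z : ℕ → 𝕜} {k : ℕ} (hm : m (k + 1) = β * m k + (1 - β) * g (k + 1))
    (hx : x (k + 1) = x k - a k * m k)
    (hx' : x (k + 2) = x (k + 1) - a (k + 1) * m (k + 1))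
    (hz : z (k + 1) = x (k + 1) + β / (1 - β) * (x (k + 1) - x k))
    (hz' : z (k + 2) = x (k + 2) + β / (1 - β) * (x (k + 2) - x (k + 1))) :
    z (k + 2) - z (k + 1) =
      1 / (1 - β) * ((a k - a (k + 1)) * m (k + 1)) - a k * g (k + 1) := by
  have hβ' : 1 - β ≠ 0 := sub_ne_zero.mpr hβ.symm
  have hβm : β * m k = m (k + 1) - (1 - β) * g (k + 1) := eq_sub_of_add_eq hm.symm
  calc z (k + 2) - z (k + 1)
      = 1 / (1 - β) * ((x (k + 2) - x (k + 1)) - β * (x (k + 1) - x k)) := by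
        rw [hz, hz']
        field_simp
        ring
    _ = 1 / (1 - β) * (a k * (β * m k) - a (k + 1) * m (k + 1)) := by
        rw [hx', hx]
        ring
    _ = 1 / (1 - β) * ((a k - a (k + 1)) * m (k + 1)) - a k * g (k + 1) := by
        rw [hβm]
        field_simp
        ring

variable {𝕜 : Type*} [Field 𝕜] [LinearOrder 𝕜] [IsStrictOrderedRing 𝕜]

theorem mul_extrapolation_succ_sub_le {β d G D : 𝕜} (hβ : β < 1)
    {g m a x z : ℕ → 𝕜} {k : ℕ} (hm : m (k + 1) = β * m k + (1 - β) * g (k + 1))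
    (hx : x (k + 1) = x k - a k * m k)
    (hx' : x (k + 2) = x (k + 1) - a (k + 1) * m (k + 1))
    (hz : z (k + 1) = x (k + 1) + β / (1 - β) * (x (k + 1) - x k))
    (hz' : z (k + 2) = x (k + 2) + β / (1 - β) * (x (k + 2) - x (k + 1)))
    (ha : a (k + 1) ≤ a k) (hmG : |m (k + 1)| ≤ G) (hdD : |d| ≤ D) :
    d * (z (k + 2) - z (k + 1)) ≤
      -(a k * (d * g (k + 1))) + 1 / (1 - β) * (G * D * (a k - a (k + 1))) := by
  have hmd : m (k + 1) * d ≤ G * D := by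
    calc m (k + 1) * d ≤ |m (k + 1)| * |d| := (le_abs_self _).trans (abs_mul _ _).le
      _ ≤ G * D := mul_le_mul hmG hdD (abs_nonneg d) ((abs_nonneg _).trans hmG)
  have hβ' : 0 ≤ 1 / (1 - β) := one_div_nonneg.mpr (sub_nonneg.mpr hβ.le)
  calc d * (z (k + 2) - z (k + 1))
      = -(a k * (d * g (k + 1))) + 1 / (1 - β) * (m (k + 1) * d * (a k - a (k + 1))) := by
        rw [extrapolation_succ_sub hβ.ne hm hx hx' hz hz']
        ring
    _ ≤ -(a k * (d * g (k + 1))) + 1 / (1 - β) * (G * D * (a k - a (k + 1))) := by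
        have ha' : 0 ≤ a k - a (k + 1) := sub_nonneg.mpr ha
        exact add_le_add_right
          (mul_le_mul_of_nonneg_left (mul_le_mul_of_nonneg_right hmd ha') hβ') _

theorem stmt14_general {ι : Type*} [Fintype ι] {K : ℕ} {β : 𝕜} (hβ : β ∈ Set.Ico 0 1)
    {g m a x z : ℕ → ι → 𝕜} (hm0 : ∀ i, m 0 i = 0)
    (hm : ∀ k i, m (k + 1) i = β * m k i + (1 - β) * g (k + 1) i)
    (hx : ∀ k, 1 ≤ k → k ≤ K → ∀ i, x (k + 1) i = x k i - a k i * m k i)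
    (hz : ∀ k, 1 ≤ k → ∀ i, z k i = x k i + β / (1 - β) * (x k i - x (k - 1) i))
    {d G D : ι → 𝕜} (hG : ∀ k, 1 ≤ k → k ≤ K → ∀ i, |g k i| ≤ G i) (hD : ∀ i, |d i| ≤ D i)
    {k : ℕ} (hk2 : 2 ≤ k) (hkK : k ≤ K) (ha : ∀ i, a k i ≤ a (k - 1) i) :
    ∑ i, d i * (z (k + 1) i - z k i) ≤
      -∑ i, a (k - 1) i * (d i * g k i) +
        1 / (1 - β) * ∑ i, G i * D i * (a (k - 1) i - a k i) := by
  obtain ⟨k, rfl⟩ := Nat.exists_eq_add_of_le' (one_le_two.trans hk2)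
  have hk : 1 ≤ k := Nat.le_of_succ_le_succ hk2
  have hmG (i : ι) : |m (k + 1) i| ≤ G i :=
    abs_movingAverage_le (m := (m · i)) (Set.Ico_subset_Icc_self hβ) (hm0 i) (hm · i)
      k.succ_pos fun j h1 hj => hG j h1 (hj.trans hkK) i
  rw [← sum_neg_distrib, mul_sum, ← sum_add_distrib]
  exact sum_le_sum fun i _ =>
    mul_extrapolation_succ_sub_le (g := (g · i)) (m := (m · i)) (a := (a · i)) (x := (x · i))
      (z := (z · i)) hβ.2 (hm k i) (hx k hk (k.le_succ.trans hkK) i)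
      (hx (k + 1) k.succ_pos hkK i) (hz (k + 1) k.succ_pos i) (hz (k + 2) (k + 1).succ_pos i)
      (ha i) (hmG i) (hD i)

end Extrapolation

/-- with nonincreasing step sizes, componentwise nondecreasing `ṽ`, and `F`
differentiable with gradient `∇F`, setting `Γ_i = max_{1≤k≤K}|g_i^(k)|` and
`Φ_i = max_{1≤k≤K}|∂_i F(x^(k))|`, for every `2 ≤ k ≤ K`:
`⟨∇F(x^(k)), z^(k+1)−z^(k)⟩ ≤ −α_{k−1} ∑_i ∂_iF(x^(k)) g_i^(k)/√(ṽ_i^(k−1))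
 + (1/(1−β₁)) ∑_i Γ_i Φ_i (α_{k−1}/√(ṽ_i^(k−1)) − α_k/√(ṽ_i^(k)))`. -/
theorem stmt14
    {n : ℕ} (hn : 1 ≤ n) (K : ℕ) (hK : 2 ≤ K)
    (β₁ β₂ : ℝ) (hβ₁ : β₁ ∈ Set.Ico (0:ℝ) 1) (hβ₂ : β₂ ∈ Set.Ico (0:ℝ) 1)
    (g m : ℕ → Fin n → ℝ)
    (hm0 : ∀ i, m 0 i = 0)
    (hm : ∀ k i, m (k+1) i = β₁ * m k i + (1 - β₁) * g (k+1) i)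
    (vtilde : ℕ → Fin n → ℝ)
    (hvpos : ∀ k, 1 ≤ k → k ≤ K → ∀ i, 0 < vtilde k i)
    (hvmono : ∀ k, 2 ≤ k → k ≤ K → ∀ i, vtilde (k-1) i ≤ vtilde k i)
    (αseq : ℕ → ℝ) (hαpos : ∀ k, 0 < αseq k) (hαmono : ∀ k, αseq (k+1) ≤ αseq k)
    (x z : ℕ → EuclideanSpace ℝ (Fin n))
    (hx0 : ∀ i, x 0 i = x 1 i)
    (hx : ∀ k, 1 ≤ k → k ≤ K → ∀ i,
      x (k+1) i = x k i - αseq k * (m k i / Real.sqrt (vtilde k i)))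
    (hz : ∀ k, 1 ≤ k → ∀ i,
      z k i = x k i + (β₁ / (1 - β₁)) * (x k i - x (k-1) i))
    (F : EuclideanSpace ℝ (Fin n) → ℝ)
    (gradF : EuclideanSpace ℝ (Fin n) → EuclideanSpace ℝ (Fin n))
    (hF : ∀ p, HasGradientAt F (gradF p) p)
    (Γ Φ : Fin n → ℝ)
    (hΓ : ∀ i, Γ i = (Finset.Icc 1 K).sup'
      (Finset.nonempty_Icc.mpr (le_trans one_le_two hK)) (fun k => |g k i|))
    (hΦ : ∀ i, Φ i = (Finset.Icc 1 K).sup'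
      (Finset.nonempty_Icc.mpr (le_trans one_le_two hK)) (fun k => |gradF (x k) i|))
    (k : ℕ) (hk2 : 2 ≤ k) (hkK : k ≤ K) :
    (∑ i, gradF (x k) i * (z (k+1) i - z k i))
      ≤ -(αseq (k-1)) * (∑ i, gradF (x k) i * g k i / Real.sqrt (vtilde (k-1) i))
        + (1 / (1 - β₁)) * ∑ i, Γ i * Φ i *
            (αseq (k-1) / Real.sqrt (vtilde (k-1) i) - αseq k / Real.sqrt (vtilde k i)) := by
  have hstep (i : Fin n) : αseq k / √(vtilde k i) ≤ αseq (k - 1) / √(vtilde (k - 1) i) :=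
    div_le_div₀ (hαpos _).le (antitone_nat_of_succ_le hαmono (k.sub_le 1))
      (Real.sqrt_pos.mpr (hvpos _ (Nat.le_sub_of_add_le hk2) ((k.sub_le 1).trans hkK) i))
      (Real.sqrt_le_sqrt (hvmono k hk2 hkK i))
  have hg : ∀ k, 1 ≤ k → k ≤ K → ∀ i, |g k i| ≤ Γ i := fun k hk1 hkK i =>
    hΓ i ▸ le_sup' (fun k => |g k i|) (mem_Icc.mpr ⟨hk1, hkK⟩)
  have hgrad (i : Fin n) : |gradF (x k) i| ≤ Φ i :=
    hΦ i ▸ le_sup' (fun k => |gradF (x k) i|) (mem_Icc.mpr ⟨one_le_two.trans hk2, hkK⟩)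
  simpa only [neg_mul, mul_sum, sum_neg_distrib, div_mul_eq_mul_div, mul_div_assoc] using
    stmt14_general (a := fun k i => αseq k / √(vtilde k i)) (x := fun k i => x k i)
      (z := fun k i => z k i) hβ₁ hm0 hm
      (fun k hk1 hkK i => (hx k hk1 hkK i).trans (by ring)) hz hg hgrad hk2 hkK hstep
end

section
/- Assume additionally that (α_k) is nonincreasing, that ṽ^(k−1) ≤ ṽ^(k) componentwise for all 2 ≤ k ≤ K, and that F : ℝ^n → ℝ is differentiable and L-smooth (‖∇F(x) − ∇F(y)‖ ≤ L‖x − y‖ for all x, y). Then for every 1 ≤ k ≤ K: (a) ⟨∇F(z^(k)) − ∇F(x^(k)), z^(k+1) − z^(k)⟩ ≤ (3Lβ₁²/(2(1−β₁)²))·‖x^(k−1) − x^(k)‖² + (L/2)·α_k²·‖g^(k) ⊘ √ṽ^(k)‖²; and (b) ‖z^(k+1) − z^(k)‖² ≤ (4β₁²/(1−β₁)²)·‖x^(k−1) − x^(k)‖² + (4/3)·α_k²·‖g^(k) ⊘ √ṽ^(k)‖², where ‖·‖ is the Euclidean norm. -/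
open Finset

/-!
Write `b = β₁ / (1 - β₁)`, `D = ‖x^(k-1) - x^(k)‖`, `W_k = diag (α_k / √ṽ^(k))`. The extrapolation
is chosen so that the momentum terms almost telescope:
`z^(k+1) - z^(k) = b ((x^(k-1) - x^(k)) - W_k m^(k-1)) - W_k g^(k)`.
Since `x^(k-1) - x^(k) = W_(k-1) m^(k-1)` (for `k = 1`, `x^(0) - x^(1)` and `m^(0)` both vanish) and
`0 ≤ W_k ≤ W_(k-1)`, subtracting `W_k m^(k-1)` only shrinks each coordinate of `x^(k-1) - x^(k)`, so
`‖z^(k+1) - z^(k)‖ ≤ b D + ‖W_k g^(k)‖`. Young's inequality gives (b), and together with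
`‖∇F(z^(k)) - ∇F(x^(k))‖ ≤ L b D` also (a).
-/

open scoped NNReal

section Extrapolation

/-- The extrapolated point `z = x₁ + β / (1 - β) (x₁ - x₀)` of two consecutive iterates `x₀`, `x₁`;
the sequence `z^(k)` is `extrapolate β₁ (x^(k-1)) (x^(k))`. -/
def extrapolate {𝕜 E : Type*} [Field 𝕜] [AddCommGroup E] [Module 𝕜 E] (β : 𝕜) (x₀ x₁ : E) : E :=
  x₁ + (β / (1 - β)) • (x₁ - x₀)

theorem extrapolate_sub_extrapolate {𝕜 E : Type*} [Field 𝕜] [AddCommGroup E] [Module 𝕜 E]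
    {β : 𝕜} {x₀ x₁ x₂ p q : E} (hβ : β ≠ 1) (hstep : x₂ = x₁ - (β • p + (1 - β) • q)) :
    extrapolate β x₁ x₂ - extrapolate β x₀ x₁ = (β / (1 - β)) • (x₀ - x₁ - p) - q := by
  have hβ' : 1 - β ≠ 0 := sub_ne_zero_of_ne hβ.symm
  subst hstep
  unfold extrapolate
  match_scalars <;> field_simp <;> ring

theorem norm_extrapolate_sub_self {E : Type*} [SeminormedAddCommGroup E] [NormedSpace ℝ E]
    {β : ℝ} (hβ : β ∈ Set.Ico 0 1) (x₀ x₁ : E) :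
    ‖extrapolate β x₀ x₁ - x₁‖ = β / (1 - β) * ‖x₀ - x₁‖ := by
  have hb : 0 ≤ β / (1 - β) := div_nonneg hβ.1 (sub_pos.2 hβ.2).le
  rw [extrapolate, add_sub_cancel_left, norm_smul, Real.norm_of_nonneg hb, norm_sub_rev]

theorem norm_extrapolate_sub_extrapolate_le {E : Type*} [SeminormedAddCommGroup E]
    [NormedSpace ℝ E] {β : ℝ} {x₀ x₁ x₂ p q : E} (hβ : β ∈ Set.Ico 0 1)
    (hstep : x₂ = x₁ - (β • p + (1 - β) • q)) (hp : ‖x₀ - x₁ - p‖ ≤ ‖x₀ - x₁‖) :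
    ‖extrapolate β x₁ x₂ - extrapolate β x₀ x₁‖ ≤ β / (1 - β) * ‖x₀ - x₁‖ + ‖q‖ := by
  have hb : 0 ≤ β / (1 - β) := div_nonneg hβ.1 (sub_pos.2 hβ.2).le
  calc ‖extrapolate β x₁ x₂ - extrapolate β x₀ x₁‖
      = ‖(β / (1 - β)) • (x₀ - x₁ - p) - q‖ := by
        rw [extrapolate_sub_extrapolate hβ.2.ne hstep]
    _ ≤ ‖(β / (1 - β)) • (x₀ - x₁ - p)‖ + ‖q‖ := norm_sub_le _ _
    _ = β / (1 - β) * ‖x₀ - x₁ - p‖ + ‖q‖ := by rw [norm_smul, Real.norm_of_nonneg hb]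
    _ ≤ β / (1 - β) * ‖x₀ - x₁‖ + ‖q‖ := by gcongr

theorem norm_extrapolate_sub_extrapolate_sq_le {E : Type*} [SeminormedAddCommGroup E]
    [NormedSpace ℝ E] {β : ℝ} {x₀ x₁ x₂ p q : E} (hβ : β ∈ Set.Ico 0 1)
    (hstep : x₂ = x₁ - (β • p + (1 - β) • q)) (hp : ‖x₀ - x₁ - p‖ ≤ ‖x₀ - x₁‖) :
    ‖extrapolate β x₁ x₂ - extrapolate β x₀ x₁‖ ^ 2
      ≤ 4 * β ^ 2 / (1 - β) ^ 2 * ‖x₀ - x₁‖ ^ 2 + 4 / 3 * ‖q‖ ^ 2 := by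
  have young (s t : ℝ) : (s + t) ^ 2 ≤ 4 * s ^ 2 + 4 / 3 * t ^ 2 := by
    linarith [sq_nonneg (3 * s - t)]
  calc ‖extrapolate β x₁ x₂ - extrapolate β x₀ x₁‖ ^ 2
      ≤ (β / (1 - β) * ‖x₀ - x₁‖ + ‖q‖) ^ 2 := by
        gcongr
        exact norm_extrapolate_sub_extrapolate_le hβ hstep hp
    _ ≤ 4 * (β / (1 - β) * ‖x₀ - x₁‖) ^ 2 + 4 / 3 * ‖q‖ ^ 2 := young _ _
    _ = 4 * β ^ 2 / (1 - β) ^ 2 * ‖x₀ - x₁‖ ^ 2 + 4 / 3 * ‖q‖ ^ 2 := by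
        rw [mul_pow, div_pow]
        ring

theorem inner_sub_extrapolate_sub_extrapolate_le {E : Type*} [SeminormedAddCommGroup E]
    [InnerProductSpace ℝ E] {L : ℝ≥0} {T : E → E} (hT : LipschitzWith L T)
    {β : ℝ} {x₀ x₁ x₂ p q : E} (hβ : β ∈ Set.Ico 0 1)
    (hstep : x₂ = x₁ - (β • p + (1 - β) • q)) (hp : ‖x₀ - x₁ - p‖ ≤ ‖x₀ - x₁‖) :
    inner ℝ (T (extrapolate β x₀ x₁) - T x₁) (extrapolate β x₁ x₂ - extrapolate β x₀ x₁)
      ≤ 3 * L * β ^ 2 / (2 * (1 - β) ^ 2) * ‖x₀ - x₁‖ ^ 2 + L / 2 * ‖q‖ ^ 2 := by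
  have young (s t : ℝ) : s * (s + t) ≤ 3 / 2 * s ^ 2 + 1 / 2 * t ^ 2 := by
    linarith [sq_nonneg (s - t)]
  have hT' : ‖T (extrapolate β x₀ x₁) - T x₁‖ ≤ L * (β / (1 - β) * ‖x₀ - x₁‖) :=
    norm_extrapolate_sub_self hβ x₀ x₁ ▸ hT.norm_sub_le _ _
  calc inner ℝ (T (extrapolate β x₀ x₁) - T x₁) (extrapolate β x₁ x₂ - extrapolate β x₀ x₁)
      ≤ ‖T (extrapolate β x₀ x₁) - T x₁‖ * ‖extrapolate β x₁ x₂ - extrapolate β x₀ x₁‖ :=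
        real_inner_le_norm _ _
    _ ≤ L * (β / (1 - β) * ‖x₀ - x₁‖) * (β / (1 - β) * ‖x₀ - x₁‖ + ‖q‖) :=
        mul_le_mul hT' (norm_extrapolate_sub_extrapolate_le hβ hstep hp) (norm_nonneg _)
          ((norm_nonneg _).trans hT')
    _ = L * (β / (1 - β) * ‖x₀ - x₁‖ * (β / (1 - β) * ‖x₀ - x₁‖ + ‖q‖)) := mul_assoc _ _ _
    _ ≤ L * (3 / 2 * (β / (1 - β) * ‖x₀ - x₁‖) ^ 2 + 1 / 2 * ‖q‖ ^ 2) := by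
        gcongr
        exact young _ _
    _ = 3 * L * β ^ 2 / (2 * (1 - β) ^ 2) * ‖x₀ - x₁‖ ^ 2 + L / 2 * ‖q‖ ^ 2 := by
        rw [mul_pow, div_pow, mul_div_mul_comm]
        ring

end Extrapolation

theorem nonneg_of_forall_norm_sub_le_mul {E F : Type*} [NormedAddCommGroup E] [Nontrivial E]
    [SeminormedAddCommGroup F] {f : E → F} {L : ℝ} (hf : ∀ p q, ‖f p - f q‖ ≤ L * ‖p - q‖) :
    0 ≤ L := by
  obtain ⟨p, q, hpq⟩ := exists_pair_ne E
  exact nonneg_of_mul_nonneg_left ((norm_nonneg _).trans (hf p q)) (norm_sub_pos_iff.2 hpq)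

section DiagonalScaling

variable {ι : Type*}

theorem toLp_mul_smul_add_smul (w u v : ι → ℝ) (a b : ℝ) :
    WithLp.toLp 2 (w * (a • u + b • v))
      = a • WithLp.toLp 2 (w * u) + b • WithLp.toLp 2 (w * v) := by
  rw [mul_add, mul_smul_comm, mul_smul_comm, WithLp.toLp_add, WithLp.toLp_smul, WithLp.toLp_smul]

/-- The diagonal `α / √v` of the preconditioner that turns the momentum into a displacement. -/
noncomputable def preconditioner (α : ℝ) (v : ι → ℝ) : ι → ℝ := fun i => α / √(v i)

theorem preconditioner_nonneg {α : ℝ} (hα : 0 ≤ α) (v : ι → ℝ) : 0 ≤ preconditioner α v :=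
  fun _ => div_nonneg hα (Real.sqrt_nonneg _)

theorem preconditioner_le_preconditioner {α α' : ℝ} {v v' : ι → ℝ} (hα : 0 ≤ α) (hαα' : α' ≤ α)
    (hv : ∀ i, 0 < v i) (hvv' : v ≤ v') : preconditioner α' v' ≤ preconditioner α v :=
  fun i => div_le_div₀ hα hαα' (Real.sqrt_pos.2 (hv i)) (Real.sqrt_le_sqrt (hvv' i))

variable [Fintype ι]

theorem norm_toLp_mul_sub_toLp_mul_le {w w' : ι → ℝ} (hw' : 0 ≤ w') (hle : w' ≤ w) (v : ι → ℝ) :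
    ‖WithLp.toLp 2 (w * v) - WithLp.toLp 2 (w' * v)‖ ≤ ‖WithLp.toLp 2 (w * v)‖ := by
  rw [EuclideanSpace.norm_eq, EuclideanSpace.norm_eq]
  gcongr with i
  have hcoord : |w i - w' i| ≤ |w i| := by
    rw [abs_of_nonneg (sub_nonneg.2 (hle i)), abs_of_nonneg ((hw' i).trans (hle i))]
    exact sub_le_self _ (hw' i)
  simpa [← sub_mul, abs_mul] using mul_le_mul_of_nonneg_right hcoord (abs_nonneg (v i))

theorem norm_sub_toLp_mul_le_of_momentum_steps {x : ℕ → EuclideanSpace ℝ ι} {m w : ℕ → ι → ℝ}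
    {K : ℕ} (hm0 : m 0 = 0) (hx0 : x 0 = x 1)
    (hstep : ∀ k, 1 ≤ k → k < K → x (k + 1) = x k - WithLp.toLp 2 (w k * m k))
    (hw : ∀ k, 0 ≤ w k) (hanti : ∀ k, 1 ≤ k → k < K → w (k + 1) ≤ w k) {k : ℕ} (hk : k < K) :
    ‖x k - x (k + 1) - WithLp.toLp 2 (w (k + 1) * m k)‖ ≤ ‖x k - x (k + 1)‖ := by
  obtain rfl | hk0 := k.eq_zero_or_pos
  · simp [hm0, hx0]
  · rw [hstep k hk0 hk, sub_sub_cancel]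
    exact norm_toLp_mul_sub_toLp_mul_le (hw _) (hanti k hk0 hk) (m k)

theorem norm_toLp_preconditioner_mul_sq (α : ℝ) (v g : ι → ℝ) :
    ‖WithLp.toLp 2 (preconditioner α v * g)‖ ^ 2 = α ^ 2 * ∑ i, (g i / √(v i)) ^ 2 := by
  rw [EuclideanSpace.real_norm_sq_eq, mul_sum]
  refine sum_congr rfl fun i _ => ?_
  simp only [preconditioner, Pi.mul_apply]
  ring

end DiagonalScaling

/-- with nonincreasing step sizes, componentwise nondecreasing `ṽ`, and `F`
differentiable and `L`-smooth, for every `1 ≤ k ≤ K`: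
(a) `⟨∇F(z^(k))−∇F(x^(k)), z^(k+1)−z^(k)⟩ ≤ (3Lβ₁²/(2(1−β₁)²))‖x^(k−1)−x^(k)‖²
     + (L/2) α_k² ‖g^(k) ⊘ √ṽ^(k)‖²`;
(b) `‖z^(k+1)−z^(k)‖² ≤ (4β₁²/(1−β₁)²)‖x^(k−1)−x^(k)‖² + (4/3) α_k² ‖g^(k) ⊘ √ṽ^(k)‖²`. -/
theorem stmt15
    {n : ℕ} (hn : 1 ≤ n) (K : ℕ) (hK : 2 ≤ K)
    (β₁ β₂ : ℝ) (hβ₁ : β₁ ∈ Set.Ico (0:ℝ) 1) (hβ₂ : β₂ ∈ Set.Ico (0:ℝ) 1)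
    (g m : ℕ → Fin n → ℝ)
    (hm0 : ∀ i, m 0 i = 0)
    (hm : ∀ k i, m (k+1) i = β₁ * m k i + (1 - β₁) * g (k+1) i)
    (vtilde : ℕ → Fin n → ℝ)
    (hvpos : ∀ k, 1 ≤ k → k ≤ K → ∀ i, 0 < vtilde k i)
    (hvmono : ∀ k, 2 ≤ k → k ≤ K → ∀ i, vtilde (k-1) i ≤ vtilde k i)
    (αseq : ℕ → ℝ) (hαpos : ∀ k, 0 < αseq k) (hαmono : ∀ k, αseq (k+1) ≤ αseq k)
    (x z : ℕ → EuclideanSpace ℝ (Fin n))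
    (hx0 : ∀ i, x 0 i = x 1 i)
    (hx : ∀ k, 1 ≤ k → k ≤ K → ∀ i,
      x (k+1) i = x k i - αseq k * (m k i / Real.sqrt (vtilde k i)))
    (hz : ∀ k, 1 ≤ k → ∀ i,
      z k i = x k i + (β₁ / (1 - β₁)) * (x k i - x (k-1) i))
    (F : EuclideanSpace ℝ (Fin n) → ℝ)
    (gradF : EuclideanSpace ℝ (Fin n) → EuclideanSpace ℝ (Fin n))
    (hF : ∀ p, HasGradientAt F (gradF p) p)
    (L : ℝ) (hL : ∀ p q, ‖gradF p - gradF q‖ ≤ L * ‖p - q‖)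
    (k : ℕ) (hk1 : 1 ≤ k) (hkK : k ≤ K) :
    ((∑ i, (gradF (z k) i - gradF (x k) i) * (z (k+1) i - z k i))
      ≤ (3 * L * β₁^2 / (2 * (1 - β₁)^2)) * ‖x (k-1) - x k‖^2
        + (L / 2) * (αseq k)^2 * (∑ i, (g k i / Real.sqrt (vtilde k i))^2))
    ∧ (‖z (k+1) - z k‖^2
        ≤ (4 * β₁^2 / (1 - β₁)^2) * ‖x (k-1) - x k‖^2
          + (4 / 3) * (αseq k)^2 * (∑ i, (g k i / Real.sqrt (vtilde k i))^2)) := by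
  have : Nonempty (Fin n) := ⟨⟨0, hn⟩⟩
  lift L to ℝ≥0 using nonneg_of_forall_norm_sub_le_mul hL
  obtain ⟨j, rfl⟩ := Nat.exists_eq_add_of_le' hk1
  let w (k : ℕ) : Fin n → ℝ := preconditioner (αseq k) (vtilde k)
  have hx' (k : ℕ) (hk : 1 ≤ k) (hkK : k ≤ K) : x (k + 1) = x k - WithLp.toLp 2 (w k * m k) := by
    ext i
    simp [hx k hk hkK i, w, preconditioner, div_mul_eq_mul_div, mul_div_assoc]
  have hz' (k : ℕ) : z (k + 1) = extrapolate β₁ (x k) (x (k + 1)) := by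
    ext i
    simp [hz (k + 1) (by lia) i, extrapolate]
  have hm' : m (j + 1) = β₁ • m j + (1 - β₁) • g (j + 1) := funext (hm j)
  have hstep := hx' (j + 1) hk1 hkK
  rw [hm', toLp_mul_smul_add_smul] at hstep
  have hdamp := norm_sub_toLp_mul_le_of_momentum_steps (w := w) (funext hm0) (PiLp.ext hx0)
    (fun k hk hkK => hx' k hk hkK.le) (fun k => preconditioner_nonneg (hαpos k).le _)
    (fun k hk hkK => preconditioner_le_preconditioner (hαpos k).le (hαmono k)
      (hvpos k hk hkK.le) (hvmono (k + 1) (by lia) hkK)) hkK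
  rw [hz', hz', Nat.add_sub_cancel, mul_assoc (L / 2 : ℝ), mul_assoc (4 / 3),
    ← norm_toLp_preconditioner_mul_sq]
  refine ⟨?_, norm_extrapolate_sub_extrapolate_sq_le hβ₁ hstep hdamp⟩
  convert inner_sub_extrapolate_sub_extrapolate_le
    (lipschitzWith_iff_norm_sub_le.2 hL) hβ₁ hstep hdamp using 1
  simp [PiLp.inner_apply, mul_comm]
end

section
/- Assume additionally that (α_k) is nonincreasing and that ṽ^(k−1) ≤ ṽ^(k) componentwise for all 2 ≤ k ≤ K. Then for every 1 ≤ k ≤ K: ‖z^(k+1) − z^(k)‖ ≤ (β₁/(1−β₁))·‖x^(k−1) − x^(k)‖ + α_k·‖g^(k) ⊘ √ṽ^(k)‖, where ‖·‖ is the Euclidean norm. -/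
open Finset

/-!
With `c = β₁ / (1 - β₁)`, write `p = α_k m^(k-1) ⊘ √ṽ^(k)` and `q = α_k g^(k) ⊘ √ṽ^(k)`. The
step `x^(k) - x^(k+1)` is then `β₁ p + (1 - β₁) q`, and the weights in `z` are chosen such that
`z^(k+1) - z^(k) = c ((x^(k-1) - x^(k)) - p) - q`. For `k ≥ 2`, `p` and `x^(k-1) - x^(k)` are both
diagonal scalings of `m^(k-1)`. As the scaling factors are nonnegative and decrease with time,
subtracting `p` shrinks every coordinate of `x^(k-1) - x^(k)`. For `k = 1`, `p` vanishes with
`m^(0)`.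
-/

section MomentumExtrapolation

/-- The point `z^(k)` of momentum methods, obtained from `u = x^(k-1)` and `v = x^(k)` by
continuing the last step by the factor `β / (1 - β)`. -/
noncomputable def momentumExtrapolation {E : Type*} [AddCommGroup E] [Module ℝ E]
    (β : ℝ) (u v : E) : E :=
  v + (β / (1 - β)) • (v - u)

theorem momentumExtrapolation_sub_momentumExtrapolation {E : Type*} [AddCommGroup E] [Module ℝ E]
    {β : ℝ} (hβ : β ≠ 1) (x₀ x₁ p q : E) :
    momentumExtrapolation β x₁ (x₁ - (β • p + (1 - β) • q)) - momentumExtrapolation β x₀ x₁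
      = (β / (1 - β)) • ((x₀ - x₁) - p) - q := by
  have hβ' : 1 - β ≠ 0 := sub_ne_zero.2 hβ.symm
  unfold momentumExtrapolation
  match_scalars <;> field_simp <;> ring

theorem norm_momentumExtrapolation_sub_le {E : Type*} [SeminormedAddCommGroup E]
    [NormedSpace ℝ E] {β : ℝ} (hβ : β ∈ Set.Ico (0 : ℝ) 1) {x₀ x₁ p : E}
    (hp : ‖(x₀ - x₁) - p‖ ≤ ‖x₀ - x₁‖) (q : E) :
    ‖momentumExtrapolation β x₁ (x₁ - (β • p + (1 - β) • q)) - momentumExtrapolation β x₀ x₁‖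
      ≤ β / (1 - β) * ‖x₀ - x₁‖ + ‖q‖ := by
  have hc : 0 ≤ β / (1 - β) := div_nonneg hβ.1 (sub_nonneg.2 hβ.2.le)
  rw [momentumExtrapolation_sub_momentumExtrapolation hβ.2.ne]
  calc ‖(β / (1 - β)) • ((x₀ - x₁) - p) - q‖
      ≤ ‖(β / (1 - β)) • ((x₀ - x₁) - p)‖ + ‖q‖ := norm_sub_le _ _
    _ = β / (1 - β) * ‖(x₀ - x₁) - p‖ + ‖q‖ := by rw [norm_smul, Real.norm_of_nonneg hc]
    _ ≤ β / (1 - β) * ‖x₀ - x₁‖ + ‖q‖ := by gcongr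

end MomentumExtrapolation

section DiagonalScaling

open scoped ENNReal

variable {ι : Type*} {p : ℝ≥0∞} {E : ι → Type*}

theorem norm_piLp_le_norm_piLp [Fintype ι] [Fact (1 ≤ p)] {F : ι → Type*}
    [∀ i, SeminormedAddCommGroup (E i)] [∀ i, SeminormedAddCommGroup (F i)]
    {f : PiLp p E} {g : PiLp p F} (h : ∀ i, ‖f i‖ ≤ ‖g i‖) : ‖f‖ ≤ ‖g‖ := by
  rcases eq_or_ne p ∞ with rfl | hp
  · rw [PiLp.norm_eq_ciSup, PiLp.norm_eq_ciSup]
    exact ciSup_mono (Set.finite_range _).bddAbove h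
  · have hp₀ : 0 < p.toReal := p.toReal_pos_iff_ne_top.2 hp
    rw [PiLp.norm_eq_sum hp₀, PiLp.norm_eq_sum hp₀]
    gcongr
    exact h _

/-- The action of a diagonal preconditioner: `diagScale s f` multiplies the block `f i` by the
scalar `s i`. It is bundled as a bilinear map in `s` and `f`. -/
noncomputable def diagScale [∀ i, SeminormedAddCommGroup (E i)] [∀ i, NormedSpace ℝ (E i)] :
    (ι → ℝ) →ₗ[ℝ] PiLp p E →ₗ[ℝ] PiLp p E :=
  LinearMap.mk₂ ℝ (fun s f => WithLp.toLp p fun i => s i • f i)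
    (fun s t f => by ext i; exact add_smul (s i) (t i) (f i))
    (fun c s f => by ext i; exact mul_smul c (s i) (f i))
    (fun s f g => by ext i; exact smul_add (s i) (f i) (g i))
    (fun c s f => by ext i; exact smul_comm (s i) c (f i))

variable [∀ i, SeminormedAddCommGroup (E i)] [∀ i, NormedSpace ℝ (E i)]

theorem diagScale_apply (s : ι → ℝ) (f : PiLp p E) (i : ι) : diagScale s f i = s i • f i :=
  rfl

variable [Fintype ι] [Fact (1 ≤ p)]

theorem norm_diagScale_le_norm_diagScale {s t : ι → ℝ} (h : ∀ i, |s i| ≤ |t i|) (f : PiLp p E) :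
    ‖diagScale s f‖ ≤ ‖diagScale t f‖ := by
  refine norm_piLp_le_norm_piLp fun i => ?_
  rw [diagScale_apply, diagScale_apply, norm_smul, norm_smul]
  exact mul_le_mul_of_nonneg_right (h i) (norm_nonneg _)

theorem norm_diagScale_sub_diagScale_le {s t : ι → ℝ} (hs : 0 ≤ s) (hst : s ≤ t) (f : PiLp p E) :
    ‖diagScale t f - diagScale s f‖ ≤ ‖diagScale t f‖ := by
  rw [← LinearMap.map_sub₂]
  refine norm_diagScale_le_norm_diagScale (fun i => ?_) f
  exact abs_le_abs_of_nonneg (sub_nonneg.2 (hst i)) (sub_le_self _ (hs i))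

end DiagonalScaling

theorem mul_inv_sqrt_le_mul_inv_sqrt {a b v w : ℝ} (hb : 0 ≤ b) (hab : a ≤ b) (hv : 0 < v)
    (hvw : v ≤ w) : a * (√w)⁻¹ ≤ b * (√v)⁻¹ := by
  gcongr

theorem stmt18_general {ι : Type*} [Fintype ι] {p : ENNReal} [Fact (1 ≤ p)] {E : ι → Type*}
    [∀ i, SeminormedAddCommGroup (E i)] [∀ i, NormedSpace ℝ (E i)]
    {K : ℕ} {β : ℝ} (hβ : β ∈ Set.Ico (0 : ℝ) 1) {g m : ℕ → PiLp p E} (hm0 : m 0 = 0)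
    (hm : ∀ k, m (k + 1) = β • m k + (1 - β) • g (k + 1))
    {s : ℕ → ι → ℝ} {α : ℕ → ℝ} (hs : ∀ k, 0 ≤ s k) (hα : ∀ k, 0 ≤ α k)
    (hαs : ∀ k, 1 ≤ k → k < K → α (k + 1) • s (k + 1) ≤ α k • s k)
    {x z : ℕ → PiLp p E}
    (hx : ∀ k, 1 ≤ k → k ≤ K → x (k + 1) = x k - α k • diagScale (s k) (m k))
    (hz : ∀ k, 1 ≤ k → z k = momentumExtrapolation β (x (k - 1)) (x k))
    {k : ℕ} (hk1 : 1 ≤ k) (hkK : k ≤ K) :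
    ‖z (k + 1) - z k‖
      ≤ β / (1 - β) * ‖x (k - 1) - x k‖ + α k * ‖diagScale (s k) (g k)‖ := by
  obtain ⟨j, rfl⟩ := Nat.exists_eq_add_of_le' hk1
  set T : PiLp p E →ₗ[ℝ] PiLp p E := α (j + 1) • diagScale (s (j + 1))
  have hshrink : ‖(x j - x (j + 1)) - T (m j)‖ ≤ ‖x j - x (j + 1)‖ := by
    rcases Nat.eq_zero_or_pos j with rfl | hj
    · simp [hm0]
    · have hstep : x j - x (j + 1) = diagScale (α j • s j) (m j) := by
        rw [hx j hj (by omega), sub_sub_cancel, LinearMap.map_smul₂]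
      have hT : T (m j) = diagScale (α (j + 1) • s (j + 1)) (m j) :=
        (LinearMap.map_smul₂ diagScale _ _ _).symm
      rw [hstep, hT]
      exact norm_diagScale_sub_diagScale_le (smul_nonneg (hα _) (hs _)) (hαs j hj hkK) _
  have hnext : x (j + 2) = x (j + 1) - (β • T (m j) + (1 - β) • T (g (j + 1))) := by
    rw [← map_smul, ← map_smul, ← map_add, ← hm]
    exact hx (j + 1) hk1 hkK
  have hTg : ‖T (g (j + 1))‖ = α (j + 1) * ‖diagScale (s (j + 1)) (g (j + 1))‖ :=
    norm_smul_of_nonneg (hα _) _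
  rw [hz (j + 2) (by omega), hz (j + 1) hk1, ← hTg]
  simp only [Nat.add_sub_cancel, Nat.add_succ_sub_one, hnext]
  exact norm_momentumExtrapolation_sub_le hβ hshrink _

/-- with nonincreasing step sizes and componentwise nondecreasing `ṽ`,
for every `1 ≤ k ≤ K`,
`‖z^(k+1) − z^(k)‖ ≤ (β₁/(1−β₁))‖x^(k−1) − x^(k)‖ + α_k ‖g^(k) ⊘ √ṽ^(k)‖`
(Euclidean norms written out explicitly). -/
theorem stmt18
    {n : ℕ} (hn : 1 ≤ n) (K : ℕ) (hK : 2 ≤ K)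
    (β₁ β₂ : ℝ) (hβ₁ : β₁ ∈ Set.Ico (0:ℝ) 1) (hβ₂ : β₂ ∈ Set.Ico (0:ℝ) 1)
    (g m : ℕ → Fin n → ℝ)
    (hm0 : ∀ i, m 0 i = 0)
    (hm : ∀ k i, m (k+1) i = β₁ * m k i + (1 - β₁) * g (k+1) i)
    (vtilde : ℕ → Fin n → ℝ)
    (hvpos : ∀ k, 1 ≤ k → k ≤ K → ∀ i, 0 < vtilde k i)
    (hvmono : ∀ k, 2 ≤ k → k ≤ K → ∀ i, vtilde (k-1) i ≤ vtilde k i)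
    (αseq : ℕ → ℝ) (hαpos : ∀ k, 0 < αseq k) (hαmono : ∀ k, αseq (k+1) ≤ αseq k)
    (x z : ℕ → Fin n → ℝ)
    (hx0 : ∀ i, x 0 i = x 1 i)
    (hx : ∀ k, 1 ≤ k → k ≤ K → ∀ i,
      x (k+1) i = x k i - αseq k * (m k i / Real.sqrt (vtilde k i)))
    (hz : ∀ k, 1 ≤ k → ∀ i,
      z k i = x k i + (β₁ / (1 - β₁)) * (x k i - x (k-1) i))
    (k : ℕ) (hk1 : 1 ≤ k) (hkK : k ≤ K) :
    Real.sqrt (∑ i, (z (k+1) i - z k i)^2)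
      ≤ (β₁ / (1 - β₁)) * Real.sqrt (∑ i, (x (k-1) i - x k i)^2)
        + αseq k * Real.sqrt (∑ i, (g k i / Real.sqrt (vtilde k i))^2) := by
  have key := stmt18_general (p := 2) (s := fun k i => (√(vtilde k i))⁻¹) (α := αseq) (K := K)
    (g := fun k => WithLp.toLp 2 (g k)) (m := fun k => WithLp.toLp 2 (m k))
    (x := fun k => WithLp.toLp 2 (x k)) (z := fun k => WithLp.toLp 2 (z k))
    hβ₁ (PiLp.ext hm0) (fun k => PiLp.ext (hm k))
    (fun k i => inv_nonneg.2 (Real.sqrt_nonneg _)) (fun k => (hαpos k).le)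
    (fun k hk hkK i => mul_inv_sqrt_le_mul_inv_sqrt (hαpos k).le (hαmono k) (hvpos k hk hkK.le i)
      (hvmono (k + 1) (by omega) hkK i))
    (fun k hk hkK => PiLp.ext fun i => by
      simp [hx k hk hkK i, diagScale_apply, div_eq_inv_mul])
    (fun k hk => PiLp.ext (hz k hk)) hk1 hkK
  simpa [EuclideanSpace.norm_eq, diagScale_apply, ← div_eq_inv_mul, div_pow] using key
end
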